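/- There exists a constant C > 0, depending on nothing, with the following property: for every function u : ℝ × (0,∞) → ℝ that is 2π-periodic in the first variable x and harmonic on ℝ × (0,∞), every x ∈ ℝ, every r ≥ 2 and every s ≥ 0, if the tail energy ε' := ∫_{(0,2π)×(r−1,∞)} |∇u|² dx dy is finite, then |u(x, r+s) − u(x, r)|² ≤ C·(s+1)·ε'. -/

import Mathlib

open MeasureTheory Real

/-- Partial derivative in the first variable. -/
noncomputable def pX (u : ℝ × ℝ → ℝ) (p : ℝ × ℝ) : ℝ := deriv (fun t => u (t, p.2)) p.1

/-- Partial derivative in the second variable. -/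
noncomputable def pY (u : ℝ × ℝ → ℝ) (p : ℝ × ℝ) : ℝ := deriv (fun t => u (p.1, t)) p.2

/-- Second partial derivative in the first variable. -/
noncomputable def pXX (u : ℝ × ℝ → ℝ) (p : ℝ × ℝ) : ℝ := deriv (fun t => pX u (t, p.2)) p.1

/-- Second partial derivative in the second variable. -/
noncomputable def pYY (u : ℝ × ℝ → ℝ) (p : ℝ × ℝ) : ℝ := deriv (fun t => pY u (p.1, t)) p.2

/-!
If `v` is harmonic on a domain of `ℂ`, then `f = ∂v/∂x - i ∂v/∂y` is holomorphic with `‖f‖ = |∇v|`,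
so the mean value property of `f ^ 2` bounds `π |∇v|²` at a point by the energy in the unit disc
around it. Integrate this over the vertical segment from `(x, r)` to `(x, r + s)`. The discs stay
inside `(x - 1, x + 1) × (r - 1, ∞)`, which embeds in a period of the cylinder, and each point of
this strip is covered by discs whose centers form a set of length at most `2`. Hence
`π ∫ |u_y|² dy ≤ 2 ε'` along the segment, and Cauchy–Schwarz gives
`|u(x, r + s) - u(x, r)|² ≤ (2 / π) s ε'`.
-/

open Set Metric Complex InnerProductSpace
open scoped Topology ENNReal

section Lebesgue

variable {α β : Type*} [MeasurableSpace α] [MeasurableSpace β] {μ : Measure α} {ν : Measure β}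

lemma sq_lintegral_le_measure_univ_mul {f : α → ℝ≥0∞} (hf : AEMeasurable f μ) :
    (∫⁻ a, f a ∂μ) ^ 2 ≤ μ univ * ∫⁻ a, f a ^ 2 ∂μ := by
  have holder : ∫⁻ a, f a ∂μ ≤ μ univ ^ (1 / 2 : ℝ) * (∫⁻ a, f a ^ 2 ∂μ) ^ (1 / 2 : ℝ) := by
    simpa using ENNReal.lintegral_mul_le_Lp_mul_Lq μ Real.HolderConjugate.two_two
      (aemeasurable_const (b := 1)) hf
  have sqrt_sq (a : ℝ≥0∞) : (a ^ (1 / 2 : ℝ)) ^ 2 = a := by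
    rw [← ENNReal.rpow_natCast, ← ENNReal.rpow_mul]
    norm_num
  calc (∫⁻ a, f a ∂μ) ^ 2
      ≤ (μ univ ^ (1 / 2 : ℝ) * (∫⁻ a, f a ^ 2 ∂μ) ^ (1 / 2 : ℝ)) ^ 2 := by gcongr
    _ = μ univ * ∫⁻ a, f a ^ 2 ∂μ := by rw [mul_pow, sqrt_sq, sqrt_sq]

lemma lintegral_setLIntegral_section_le [SFinite μ] [SFinite ν] {S : Set (α × β)}
    (hS : MeasurableSet S) {M : ℝ≥0∞} (hM : ∀ b, μ ((·, b) ⁻¹' S) ≤ M) {g : β → ℝ≥0∞}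
    (hg : AEMeasurable g ν) :
    ∫⁻ a, ∫⁻ b in Prod.mk a ⁻¹' S, g b ∂ν ∂μ ≤ M * ∫⁻ b, g b ∂ν := by
  have hmeas : AEMeasurable (S.indicator fun q ↦ g q.2) (μ.prod ν) := hg.comp_snd.indicator hS
  calc ∫⁻ a, ∫⁻ b in Prod.mk a ⁻¹' S, g b ∂ν ∂μ
      = ∫⁻ a, ∫⁻ b, S.indicator (fun q ↦ g q.2) (a, b) ∂ν ∂μ := by
        simp_rw [← lintegral_indicator (measurable_prodMk_left hS)]
        rfl
    _ = ∫⁻ b, ∫⁻ a, S.indicator (fun q ↦ g q.2) (a, b) ∂μ ∂ν := lintegral_lintegral_swap hmeas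
    _ = ∫⁻ b, g b * μ ((·, b) ⁻¹' S) ∂ν := by
        simp_rw [← setLIntegral_const, ← lintegral_indicator (measurable_prodMk_right hS)]
        rfl
    _ ≤ ∫⁻ b, M * g b ∂ν := lintegral_mono fun b ↦ by rw [mul_comm]; gcongr; exact hM b
    _ ≤ M * ∫⁻ b, g b ∂ν := (lintegral_const_mul'' M hg).le

lemma setLIntegral_Ioo_le_of_periodic {G : ℝ → ℝ≥0∞} {T : ℝ} (hG : Function.Periodic G T)
    {a b : ℝ} (hab : b ≤ a + T) (c : ℝ) :
    ∫⁻ t in Ioo a b, G t ≤ ∫⁻ t in Ioo c (c + T), G t := by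
  rcases le_or_gt T 0 with hT | hT
  · simp [Ioo_eq_empty_of_le (show b ≤ a by linarith)]
  have invariant : ∀ (g : AddSubgroup.zmultiples T) (t : ℝ), G (g +ᵥ t) = G t := by
    rintro ⟨_, n, rfl⟩ t
    simpa [AddSubgroup.vadd_def, add_comm] using hG.zsmul n t
  calc ∫⁻ t in Ioo a b, G t
      ≤ ∫⁻ t in Ioc a (a + T), G t := lintegral_mono_set fun t ht ↦ ⟨ht.1, ht.2.le.trans hab⟩
    _ = ∫⁻ t in Ioc c (c + T), G t :=
        (isAddFundamentalDomain_Ioc hT a).setLIntegral_eq (isAddFundamentalDomain_Ioc hT c) G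
          invariant
    _ = ∫⁻ t in Ioo c (c + T), G t := by rw [restrict_Ioo_eq_restrict_Ioc]

lemma setLIntegral_reProdIm {G : ℂ → ℝ≥0∞} (hG : Measurable G) (A B : Set ℝ) :
    ∫⁻ w in A ×ℂ B, G w = ∫⁻ x in A, ∫⁻ y in B, G ⟨x, y⟩ := by
  calc ∫⁻ w in A ×ℂ B, G w
      = ∫⁻ p in A ×ˢ B, G (measurableEquivRealProd.symm p) :=
        volume_preserving_equiv_real_prod.setLIntegral_comp_preimage_emb
          measurableEquivRealProd.measurableEmbedding
          (fun p ↦ G (measurableEquivRealProd.symm p)) (A ×ˢ B)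
    _ = ∫⁻ x in A, ∫⁻ y in B, G ⟨x, y⟩ :=
        setLIntegral_prod _ (hG.comp measurableEquivRealProd.symm.measurable).aemeasurable

lemma setLIntegral_reProdIm_le_of_periodic {G : ℂ → ℝ≥0∞} (hG : Measurable G) {T : ℝ}
    (hper : Function.Periodic G T) {a b : ℝ} (hab : b ≤ a + T) (c : ℝ) (B : Set ℝ) :
    ∫⁻ w in Ioo a b ×ℂ B, G w ≤ ∫⁻ w in Ioo c (c + T) ×ℂ B, G w := by
  have periodic_section (x y : ℝ) : G ⟨x + T, y⟩ = G ⟨x, y⟩ := by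
    rw [← hper ⟨x, y⟩]
    congr 1
    apply Complex.ext <;> simp
  rw [setLIntegral_reProdIm hG, setLIntegral_reProdIm hG]
  exact setLIntegral_Ioo_le_of_periodic (fun x ↦ by simp only [periodic_section]) hab c

end Lebesgue

lemma contDiff_complexMk_left {n : WithTop ℕ∞} (y : ℝ) : ContDiff ℝ n fun x ↦ (⟨x, y⟩ : ℂ) :=
  equivRealProdCLM.symm.contDiff.comp (contDiff_prodMk_left y)

lemma contDiff_complexMk_right {n : WithTop ℕ∞} (x : ℝ) : ContDiff ℝ n fun y ↦ (⟨x, y⟩ : ℂ) :=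
  equivRealProdCLM.symm.contDiff.comp (contDiff_prodMk_right x)

section MeanValue

lemma setLIntegral_ball_eq_lintegral_circleMap {g : ℂ → ℝ≥0∞} {c : ℂ} {R : ℝ}
    (hg : ContinuousOn g (ball c R)) :
    ∫⁻ w in ball c R, g w =
      ∫⁻ ρ in Ioo 0 R, ENNReal.ofReal ρ * ∫⁻ θ in Ioo (-π) π, g (circleMap c ρ θ) := by
  let D : Set (ℝ × ℝ) := Ioo 0 R ×ˢ Ioo (-π) π
  have hD : MeasurableSet D := measurableSet_Ioo.prod measurableSet_Ioo
  have polar_eq (p : ℝ × ℝ) : c + Complex.polarCoord.symm p = circleMap c p.1 p.2 := by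
    simp [circleMap, exp_mul_I]
  have polar_mem {p : ℝ × ℝ} (hp : p ∈ polarCoord.target) :
      circleMap c p.1 p.2 ∈ ball c R ↔ p ∈ D := by
    have hρ : 0 < p.1 := hp.1
    simp [D, circleMap, abs_of_pos hρ, hρ, show -π < p.2 ∧ p.2 < π from hp.2]
  have hmeas : AEMeasurable (fun p : ℝ × ℝ ↦ ENNReal.ofReal p.1 * g (circleMap c p.1 p.2))
      (volume.restrict D) := by
    have hcont : ContinuousOn (fun p : ℝ × ℝ ↦ g (circleMap c p.1 p.2)) D :=
      hg.comp (by unfold circleMap; fun_prop)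
        fun p hp ↦ (polar_mem ⟨hp.1.1, hp.2⟩).2 hp
    exact (by fun_prop : Measurable fun p : ℝ × ℝ ↦ ENNReal.ofReal p.1).aemeasurable.mul
      (hcont.aemeasurable hD)
  calc ∫⁻ w in ball c R, g w
      = ∫⁻ w, (ball c R).indicator g (c + w) := by
        rw [lintegral_add_left_eq_self, lintegral_indicator measurableSet_ball]
    _ = ∫⁻ p in polarCoord.target,
          D.indicator (fun p ↦ ENNReal.ofReal p.1 * g (circleMap c p.1 p.2)) p := by
        rw [← Complex.lintegral_comp_polarCoord_symm]
        refine setLIntegral_congr_fun polarCoord.open_target.measurableSet fun p hp ↦ ?_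
        classical
        simp only [polar_eq, indicator_apply, polar_mem hp, smul_eq_mul, mul_ite, mul_zero]
    _ = ∫⁻ p in D, ENNReal.ofReal p.1 * g (circleMap c p.1 p.2) := by
        rw [setLIntegral_indicator hD, inter_eq_left.2]
        exact fun p hp ↦ ⟨hp.1.1, hp.2⟩
    _ = ∫⁻ ρ in Ioo 0 R, ENNReal.ofReal ρ * ∫⁻ θ in Ioo (-π) π, g (circleMap c ρ θ) := by
        rw [Measure.volume_eq_prod, setLIntegral_prod _ hmeas]
        simp_rw [lintegral_const_mul' _ _ ENNReal.ofReal_ne_top]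

variable {E : Type*} [NormedAddCommGroup E] [NormedSpace ℂ E] [CompleteSpace E] {f : ℂ → E}

lemma two_pi_mul_enorm_le_lintegral_circleMap {c : ℂ} {ρ : ℝ}
    (hf : DiffContOnCl ℂ f (ball c |ρ|)) :
    ENNReal.ofReal (2 * π) * ‖f c‖ₑ ≤ ∫⁻ θ in Ioo (-π) π, ‖f (circleMap c ρ θ)‖ₑ := by
  have mean_value : (2 * π) • f c = ∫ θ in -π..π, f (circleMap c ρ θ) := by
    rw [← hf.circleAverage, circleAverage_eq_integral_add (-π), smul_inv_smul₀ (by positivity),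
      intervalIntegral.integral_comp_add_right fun θ ↦ f (circleMap c ρ θ)]
    ring_nf
  calc ENNReal.ofReal (2 * π) * ‖f c‖ₑ
      = ‖∫ θ in -π..π, f (circleMap c ρ θ)‖ₑ := by
        rw [← mean_value, enorm_smul, Real.enorm_eq_ofReal (by positivity)]
    _ = ‖∫ θ in Ioo (-π) π, f (circleMap c ρ θ)‖ₑ := by
        rw [intervalIntegral.integral_of_le (by linarith [pi_pos]), integral_Ioc_eq_integral_Ioo]
    _ ≤ ∫⁻ θ in Ioo (-π) π, ‖f (circleMap c ρ θ)‖ₑ := enorm_integral_le_lintegral_enorm _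

lemma volume_ball_mul_enorm_le_lintegral {c : ℂ} {R : ℝ} (hf : DifferentiableOn ℂ f (ball c R)) :
    volume (ball c R) * ‖f c‖ₑ ≤ ∫⁻ w in ball c R, ‖f w‖ₑ := by
  have on_circle {ρ : ℝ} (hρ : ρ ∈ Ioo 0 R) :
      ENNReal.ofReal (2 * π) * ‖f c‖ₑ ≤ ∫⁻ θ in Ioo (-π) π, ‖f (circleMap c ρ θ)‖ₑ := by
    refine two_pi_mul_enorm_le_lintegral_circleMap (hf.diffContOnCl_ball ?_)
    rw [abs_of_pos hρ.1]
    exact closedBall_subset_ball hρ.2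
  rw [setLIntegral_ball_eq_lintegral_circleMap hf.continuousOn.enorm]
  calc volume (ball c R) * ‖f c‖ₑ
      = ∫⁻ ρ in Ioo 0 R, ENNReal.ofReal ρ * (ENNReal.ofReal (2 * π) * ‖f c‖ₑ) := by
        rw [← setLIntegral_one, setLIntegral_ball_eq_lintegral_circleMap continuousOn_const,
          ← lintegral_mul_const' _ _ enorm_ne_top]
        simp [mul_assoc, two_mul]
    _ ≤ ∫⁻ ρ in Ioo 0 R, ENNReal.ofReal ρ * ∫⁻ θ in Ioo (-π) π, ‖f (circleMap c ρ θ)‖ₑ :=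
        setLIntegral_mono' measurableSet_Ioo fun ρ hρ ↦ by gcongr; exact on_circle hρ

lemma volume_ball_mul_lintegral_vertical_le {Ω : Set ℂ} (hΩ : MeasurableSet Ω)
    (hf : DifferentiableOn ℂ f Ω) {A : Set ℝ} (hA : MeasurableSet A) {x R : ℝ}
    (hball : ∀ y ∈ A, ball (⟨x, y⟩ : ℂ) R ⊆ Ω) :
    volume (ball (0 : ℂ) R) * ∫⁻ y in A, ‖f ⟨x, y⟩‖ₑ ≤
      ENNReal.ofReal (2 * R) * ∫⁻ w in Ω, ‖f w‖ₑ := by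
  let S : Set (ℝ × ℂ) := {q | dist q.2 ⟨x, q.1⟩ < R}
  have continuous_vertical : Continuous fun y : ℝ ↦ (⟨x, y⟩ : ℂ) :=
    (contDiff_complexMk_right (n := 0) x).continuous
  have hS : MeasurableSet S := (isOpen_lt (by fun_prop) continuous_const).measurableSet
  have centers_subset (w : ℂ) : (·, w) ⁻¹' S ⊆ ball w.im R := fun y hy ↦ by
    rw [mem_ball, dist_comm, Real.dist_eq]
    exact (abs_im_le_norm (w - ⟨x, y⟩)).trans_lt ((dist_eq_norm w ⟨x, y⟩).symm.trans_lt hy)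
  have volume_centers_le (w : ℂ) : volume.restrict A ((·, w) ⁻¹' S) ≤ ENNReal.ofReal (2 * R) :=
    calc volume.restrict A ((·, w) ⁻¹' S)
        ≤ volume ((·, w) ⁻¹' S) := Measure.restrict_apply_le _ _
      _ ≤ volume (ball w.im R) := measure_mono (centers_subset w)
      _ = ENNReal.ofReal (2 * R) := Real.volume_ball _ _
  calc volume (ball (0 : ℂ) R) * ∫⁻ y in A, ‖f ⟨x, y⟩‖ₑ
      = ∫⁻ y in A, volume (ball (⟨x, y⟩ : ℂ) R) * ‖f ⟨x, y⟩‖ₑ := by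
        simp_rw [Measure.addHaar_ball_center volume (⟨x, _⟩ : ℂ)]
        rw [lintegral_const_mul' _ _ measure_ball_lt_top.ne]
    _ ≤ ∫⁻ y in A, ∫⁻ w in ball ⟨x, y⟩ R, ‖f w‖ₑ := setLIntegral_mono' hA fun y hy ↦
        volume_ball_mul_enorm_le_lintegral (hf.mono (hball y hy))
    _ = ∫⁻ y in A, ∫⁻ w in Prod.mk y ⁻¹' S, ‖f w‖ₑ ∂(volume.restrict Ω) :=
        setLIntegral_congr_fun hA fun y hy ↦ by
          rw [Measure.restrict_restrict (measurable_prodMk_left hS)]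
          exact congrArg (fun B ↦ ∫⁻ w in B, ‖f w‖ₑ) (inter_eq_left.2 (hball y hy)).symm
    _ ≤ ENNReal.ofReal (2 * R) * ∫⁻ w in Ω, ‖f w‖ₑ :=
        lintegral_setLIntegral_section_le hS volume_centers_le
          (hf.continuousOn.aestronglyMeasurable hΩ).enorm

end MeanValue

section Harmonic

variable {F : Type*} [NormedAddCommGroup F] [NormedSpace ℝ F] {V : ℂ → F}

lemma hasDerivAt_horizontal {z : ℂ} (hV : DifferentiableAt ℝ V z) :
    HasDerivAt (fun t : ℝ ↦ V ⟨t, z.im⟩) (fderiv ℝ V z 1) z.re := by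
  have line : HasDerivAt (fun t : ℝ ↦ (⟨t, z.im⟩ : ℂ)) 1 z.re := by
    simpa [mk_eq_add_mul_I] using
      (ofRealCLM.hasDerivAt (x := z.re)).add_const ((z.im : ℂ) * I)
  exact hV.hasFDerivAt.comp_hasDerivAt z.re line

lemma hasDerivAt_vertical {z : ℂ} (hV : DifferentiableAt ℝ V z) :
    HasDerivAt (fun t : ℝ ↦ V ⟨z.re, t⟩) (fderiv ℝ V z I) z.im := by
  have line : HasDerivAt (fun t : ℝ ↦ (⟨z.re, t⟩ : ℂ)) I z.im := by
    simpa [mk_eq_add_mul_I] using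
      (ofRealCLM.hasDerivAt (x := z.im)).mul_const I |>.const_add (z.re : ℂ)
  exact hV.hasFDerivAt.comp_hasDerivAt z.im line

/-- The gradient of `v : ℂ → ℝ` encoded as `∂v/∂x - i ∂v/∂y`. With this sign it is holomorphic
wherever `v` is harmonic. -/
noncomputable def conjGradient (v : ℂ → ℝ) (z : ℂ) : ℂ := fderiv ℝ v z 1 - I * fderiv ℝ v z I

lemma enorm_conjGradient_sq (v : ℂ → ℝ) (z : ℂ) :
    ‖conjGradient v z‖ₑ ^ 2 = ENNReal.ofReal (fderiv ℝ v z 1 ^ 2 + fderiv ℝ v z I ^ 2) := by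
  rw [← ofReal_norm, ← ENNReal.ofReal_pow (norm_nonneg _), ← normSq_eq_norm_sq]
  simp [conjGradient, normSq_apply, sq]

lemma enorm_fderiv_I_le_enorm_conjGradient (v : ℂ → ℝ) (z : ℂ) :
    ‖fderiv ℝ v z I‖ₑ ≤ ‖conjGradient v z‖ₑ := by
  refine enorm_le_iff_norm_le.2 ((abs_im_le_norm (conjGradient v z)).trans' ?_)
  simp [conjGradient]

variable {v : ℂ → ℝ} {Ω : Set ℂ}

lemma measurable_conjGradient (v : ℂ → ℝ) : Measurable (conjGradient v) := by
  have measurable_partial (e : ℂ) : Measurable fun z ↦ (fderiv ℝ v z e : ℂ) :=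
    measurable_ofReal.comp (measurable_fderiv_apply_const ℝ v e)
  exact (measurable_partial 1).sub ((measurable_partial I).const_mul I)

lemma periodic_conjGradient {v : ℂ → ℝ} {c : ℂ} (hv : Function.Periodic v c) :
    Function.Periodic (conjGradient v) c := fun z ↦ by
  have fderiv_periodic : fderiv ℝ v (z + c) = fderiv ℝ v z := by
    rw [← fderiv_comp_add_right, hv.funext]
  simp only [conjGradient, fderiv_periodic]

lemma differentiableOn_conjGradient (hv : HarmonicOnNhd v Ω) :
    DifferentiableOn ℂ (conjGradient v) Ω := fun z hz ↦
  (HarmonicAt.differentiableAt_complex_partial (hv z hz)).differentiableWithinAt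

lemma enorm_sub_vertical_sq_le {a b x : ℝ} (hab : a ≤ b)
    (hv : ∀ y ∈ Icc a b, ContDiffAt ℝ 1 v ⟨x, y⟩) :
    ‖v ⟨x, b⟩ - v ⟨x, a⟩‖ₑ ^ 2 ≤
      ENNReal.ofReal (b - a) * ∫⁻ y in Icc a b, ‖conjGradient v ⟨x, y⟩‖ₑ ^ 2 := by
  have contDiffOn_vertical : ContDiffOn ℝ 1 (fun y ↦ v ⟨x, y⟩) (Icc a b) := fun y hy ↦
    ((hv y hy).comp y (contDiff_complexMk_right x).contDiffAt).contDiffWithinAt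
  have deriv_le {y : ℝ} (hy : y ∈ Icc a b) :
      ‖deriv (fun t ↦ v ⟨x, t⟩) y‖ₑ ≤ ‖conjGradient v ⟨x, y⟩‖ₑ := by
    rw [(hasDerivAt_vertical ((hv y hy).differentiableAt one_ne_zero)).deriv]
    exact enorm_fderiv_I_le_enorm_conjGradient v ⟨x, y⟩
  calc ‖v ⟨x, b⟩ - v ⟨x, a⟩‖ₑ ^ 2
      ≤ (∫⁻ y in Icc a b, ‖deriv (fun t ↦ v ⟨x, t⟩) y‖ₑ) ^ 2 := by
        gcongr
        exact enorm_sub_le_lintegral_deriv_of_contDiffOn_Icc contDiffOn_vertical hab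
    _ ≤ ENNReal.ofReal (b - a) * ∫⁻ y in Icc a b, ‖deriv (fun t ↦ v ⟨x, t⟩) y‖ₑ ^ 2 := by
        simpa using sq_lintegral_le_measure_univ_mul (μ := volume.restrict (Icc a b))
          (measurable_deriv fun t ↦ v ⟨x, t⟩).enorm.aemeasurable
    _ ≤ ENNReal.ofReal (b - a) * ∫⁻ y in Icc a b, ‖conjGradient v ⟨x, y⟩‖ₑ ^ 2 := by
        gcongr 1
        exact setLIntegral_mono' measurableSet_Icc fun y hy ↦ by gcongr; exact deriv_le hy

lemma volume_ball_mul_enorm_sub_vertical_sq_le (hΩ : MeasurableSet Ω) (hv : HarmonicOnNhd v Ω)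
    {a b x R : ℝ} (hab : a ≤ b) (hR : 0 < R) (hball : ∀ y ∈ Icc a b, ball (⟨x, y⟩ : ℂ) R ⊆ Ω) :
    volume (ball (0 : ℂ) R) * ‖v ⟨x, b⟩ - v ⟨x, a⟩‖ₑ ^ 2 ≤
      ENNReal.ofReal (b - a) *
        (ENNReal.ofReal (2 * R) * ∫⁻ w in Ω, ‖conjGradient v w‖ₑ ^ 2) := by
  have contDiffAt_segment (y : ℝ) (hy : y ∈ Icc a b) : ContDiffAt ℝ 1 v ⟨x, y⟩ :=
    (hv _ (hball y hy (mem_ball_self hR))).1.of_le one_le_two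
  have energy_segment_le :=
    volume_ball_mul_lintegral_vertical_le hΩ ((differentiableOn_conjGradient hv).pow 2)
      measurableSet_Icc hball
  simp only [Pi.pow_apply, enorm_pow] at energy_segment_le
  calc volume (ball (0 : ℂ) R) * ‖v ⟨x, b⟩ - v ⟨x, a⟩‖ₑ ^ 2
      ≤ volume (ball (0 : ℂ) R) *
          (ENNReal.ofReal (b - a) * ∫⁻ y in Icc a b, ‖conjGradient v ⟨x, y⟩‖ₑ ^ 2) := by
        gcongr
        exact enorm_sub_vertical_sq_le hab contDiffAt_segment
    _ ≤ ENNReal.ofReal (b - a) *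
          (ENNReal.ofReal (2 * R) * ∫⁻ w in Ω, ‖conjGradient v w‖ₑ ^ 2) := by
        rw [mul_left_comm]
        gcongr

lemma sq_sub_vertical_le_of_lintegral_le (hΩ : MeasurableSet Ω) (hv : HarmonicOnNhd v Ω)
    {a b x R : ℝ} (hab : a ≤ b) (hR : 0 < R) (hball : ∀ y ∈ Icc a b, ball (⟨x, y⟩ : ℂ) R ⊆ Ω)
    {ε : ℝ} (hε : 0 ≤ ε) (henergy : ∫⁻ w in Ω, ‖conjGradient v w‖ₑ ^ 2 ≤ ENNReal.ofReal ε) :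
    (v ⟨x, b⟩ - v ⟨x, a⟩) ^ 2 ≤ 2 / (π * R) * (b - a) * ε := by
  have hba : 0 ≤ b - a := sub_nonneg.2 hab
  have volume_eq : volume (ball (0 : ℂ) R) = ENNReal.ofReal (R ^ 2 * π) := by
    rw [Complex.volume_ball, ENNReal.ofReal_mul (by positivity), ENNReal.ofReal_pow hR.le,
      ← NNReal.coe_real_pi, ENNReal.ofReal_coe_nnreal]
  have bound : ENNReal.ofReal (R ^ 2 * π * (v ⟨x, b⟩ - v ⟨x, a⟩) ^ 2) ≤
      ENNReal.ofReal ((b - a) * (2 * R * ε)) :=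
    calc ENNReal.ofReal (R ^ 2 * π * (v ⟨x, b⟩ - v ⟨x, a⟩) ^ 2)
        = volume (ball (0 : ℂ) R) * ‖v ⟨x, b⟩ - v ⟨x, a⟩‖ₑ ^ 2 := by
          rw [volume_eq, ENNReal.ofReal_mul (by positivity), ← enorm_pow,
            Real.enorm_of_nonneg (sq_nonneg _)]
      _ ≤ ENNReal.ofReal (b - a) *
            (ENNReal.ofReal (2 * R) * ∫⁻ w in Ω, ‖conjGradient v w‖ₑ ^ 2) :=
          volume_ball_mul_enorm_sub_vertical_sq_le hΩ hv hab hR hball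
      _ ≤ ENNReal.ofReal ((b - a) * (2 * R * ε)) := by
          rw [ENNReal.ofReal_mul hba, ENNReal.ofReal_mul (p := 2 * R) (by positivity)]
          gcongr
  rw [ENNReal.ofReal_le_ofReal_iff (by positivity), ← le_div_iff₀' (by positivity)] at bound
  exact bound.trans_eq (by field_simp)

end Harmonic

section Coordinates

/-- The function `x + i y ↦ u (x, y)` on the complex plane, which carries the theory of harmonic and
holomorphic functions. -/
def onComplex (u : ℝ × ℝ → ℝ) (z : ℂ) : ℝ := u (z.re, z.im)

variable {u : ℝ × ℝ → ℝ} {z : ℂ}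

lemma contDiffAt_onComplex {n : WithTop ℕ∞} (hu : ContDiffAt ℝ n u (z.re, z.im)) :
    ContDiffAt ℝ n (onComplex u) z :=
  ContDiffAt.comp z hu equivRealProdCLM.contDiff.contDiffAt

lemma pX_eq_fderiv_onComplex (hu : DifferentiableAt ℝ (onComplex u) z) :
    pX u (z.re, z.im) = fderiv ℝ (onComplex u) z 1 :=
  (hasDerivAt_horizontal hu).deriv

lemma pY_eq_fderiv_onComplex (hu : DifferentiableAt ℝ (onComplex u) z) :
    pY u (z.re, z.im) = fderiv ℝ (onComplex u) z I :=
  (hasDerivAt_vertical hu).deriv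

lemma enorm_conjGradient_onComplex_sq (hu : DifferentiableAt ℝ (onComplex u) z) :
    ‖conjGradient (onComplex u) z‖ₑ ^ 2 =
      ENNReal.ofReal (pX u (z.re, z.im) ^ 2 + pY u (z.re, z.im) ^ 2) := by
  rw [enorm_conjGradient_sq, pX_eq_fderiv_onComplex hu, pY_eq_fderiv_onComplex hu]

lemma pXX_eq_fderiv_fderiv_onComplex (hu : ContDiffAt ℝ 2 (onComplex u) z) :
    pXX u (z.re, z.im) = fderiv ℝ (fderiv ℝ (onComplex u)) z 1 1 := by
  have hfderiv : DifferentiableAt ℝ (fderiv ℝ (onComplex u)) z :=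
    (hu.fderiv_right (m := 1) (by norm_num)).differentiableAt one_ne_zero
  have continuous_line : Continuous fun t ↦ (⟨t, z.im⟩ : ℂ) :=
    (contDiff_complexMk_left (n := 0) z.im).continuous
  have pX_line : (fun t ↦ pX u (t, z.im)) =ᶠ[𝓝 z.re]
      fun t ↦ fderiv ℝ (onComplex u) ⟨t, z.im⟩ 1 := by
    filter_upwards [continuous_line.continuousAt.eventually (hu.eventually (by simp))] with t ht
    exact pX_eq_fderiv_onComplex (ht.differentiableAt two_ne_zero)
  rw [pXX, pX_line.deriv_eq,
    (hasDerivAt_horizontal (hfderiv.clm_apply (differentiableAt_const (1 : ℂ)))).deriv,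
    fderiv_clm_apply hfderiv (differentiableAt_const _)]
  simp

lemma pYY_eq_fderiv_fderiv_onComplex (hu : ContDiffAt ℝ 2 (onComplex u) z) :
    pYY u (z.re, z.im) = fderiv ℝ (fderiv ℝ (onComplex u)) z I I := by
  have hfderiv : DifferentiableAt ℝ (fderiv ℝ (onComplex u)) z :=
    (hu.fderiv_right (m := 1) (by norm_num)).differentiableAt one_ne_zero
  have continuous_line : Continuous fun t ↦ (⟨z.re, t⟩ : ℂ) :=
    (contDiff_complexMk_right (n := 0) z.re).continuous
  have pY_line : (fun t ↦ pY u (z.re, t)) =ᶠ[𝓝 z.im]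
      fun t ↦ fderiv ℝ (onComplex u) ⟨z.re, t⟩ I := by
    filter_upwards [continuous_line.continuousAt.eventually (hu.eventually (by simp))] with t ht
    exact pY_eq_fderiv_onComplex (ht.differentiableAt two_ne_zero)
  rw [pYY, pY_line.deriv_eq,
    (hasDerivAt_vertical (hfderiv.clm_apply (differentiableAt_const I))).deriv,
    fderiv_clm_apply hfderiv (differentiableAt_const _)]
  simp

lemma laplacian_onComplex (hu : ContDiffAt ℝ 2 (onComplex u) z) :
    Laplacian.laplacian (onComplex u) z = pXX u (z.re, z.im) + pYY u (z.re, z.im) := by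
  rw [laplacian_eq_iteratedFDeriv_complexPlane, pXX_eq_fderiv_fderiv_onComplex hu,
    pYY_eq_fderiv_fderiv_onComplex hu]
  simp [iteratedFDeriv_two_apply]

variable {Ω : Set (ℝ × ℝ)}

lemma harmonicOnNhd_onComplex (hΩ : IsOpen Ω) (hu : ContDiffOn ℝ 2 u Ω)
    (hlaplace : ∀ p ∈ Ω, pXX u p + pYY u p = 0) :
    HarmonicOnNhd (onComplex u) (equivRealProd ⁻¹' Ω) := by
  have contDiffAt {z : ℂ} (hz : z ∈ equivRealProd ⁻¹' Ω) : ContDiffAt ℝ 2 (onComplex u) z :=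
    contDiffAt_onComplex (hu.contDiffAt (hΩ.mem_nhds hz))
  intro z hz
  refine ⟨contDiffAt hz, ?_⟩
  filter_upwards [(hΩ.preimage equivRealProdCLM.continuous).mem_nhds hz] with w hw
  exact (laplacian_onComplex (contDiffAt hw)).trans (hlaplace _ hw)

lemma setLIntegral_enorm_conjGradient_onComplex_sq (hΩ : MeasurableSet Ω)
    (hu : ∀ z : ℂ, (z.re, z.im) ∈ Ω → DifferentiableAt ℝ (onComplex u) z) :
    ∫⁻ w in equivRealProd ⁻¹' Ω, ‖conjGradient (onComplex u) w‖ₑ ^ 2 =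
      ∫⁻ p in Ω, ENNReal.ofReal (pX u p ^ 2 + pY u p ^ 2) := by
  calc ∫⁻ w in equivRealProd ⁻¹' Ω, ‖conjGradient (onComplex u) w‖ₑ ^ 2
      = ∫⁻ w in equivRealProd ⁻¹' Ω,
          ENNReal.ofReal (pX u (equivRealProd w) ^ 2 + pY u (equivRealProd w) ^ 2) :=
        setLIntegral_congr_fun (measurableEquivRealProd.measurable hΩ) fun w hw ↦
          enorm_conjGradient_onComplex_sq (hu w hw)
    _ = ∫⁻ p in Ω, ENNReal.ofReal (pX u p ^ 2 + pY u p ^ 2) :=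
        volume_preserving_equiv_real_prod.setLIntegral_comp_preimage_emb
          measurableEquivRealProd.measurableEmbedding
          (fun p ↦ ENNReal.ofReal (pX u p ^ 2 + pY u p ^ 2)) Ω

lemma setLIntegral_enorm_conjGradient_reProdIm_le_of_periodic {T : ℝ}
    (hper : ∀ x y : ℝ, u (x + T, y) = u (x, y)) {a b : ℝ} (hab : b ≤ a + T) {B : Set ℝ}
    (hB : MeasurableSet B) (hu : ∀ z : ℂ, z.im ∈ B → DifferentiableAt ℝ (onComplex u) z) :
    ∫⁻ w in Ioo a b ×ℂ B, ‖conjGradient (onComplex u) w‖ₑ ^ 2 ≤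
      ∫⁻ p in Ioo 0 T ×ˢ B, ENNReal.ofReal (pX u p ^ 2 + pY u p ^ 2) := by
  have periodic_onComplex : Function.Periodic (onComplex u) T := fun z ↦ by
    simpa [onComplex] using hper z.re z.im
  calc ∫⁻ w in Ioo a b ×ℂ B, ‖conjGradient (onComplex u) w‖ₑ ^ 2
      ≤ ∫⁻ w in Ioo 0 (0 + T) ×ℂ B, ‖conjGradient (onComplex u) w‖ₑ ^ 2 :=
        setLIntegral_reProdIm_le_of_periodic ((measurable_conjGradient _).enorm.pow_const 2)
          ((periodic_conjGradient periodic_onComplex).comp (‖·‖ₑ ^ 2)) hab 0 B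
    _ = ∫⁻ p in Ioo 0 T ×ˢ B, ENNReal.ofReal (pX u p ^ 2 + pY u p ^ 2) := by
        rw [zero_add]
        exact setLIntegral_enorm_conjGradient_onComplex_sq (measurableSet_Ioo.prod hB)
          fun z hz ↦ hu z hz.2

lemma ball_mk_subset_reProdIm_Ioi {x y r R : ℝ} (hy : r ≤ y) :
    ball (⟨x, y⟩ : ℂ) R ⊆ Ioo (x - R) (x + R) ×ℂ Ioi (r - R) := by
  intro w hw
  have hw' : ‖w - ⟨x, y⟩‖ < R := mem_ball_iff_norm.1 hw
  have hre := abs_lt.1 ((abs_re_le_norm (w - ⟨x, y⟩)).trans_lt hw')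
  have him := abs_lt.1 ((abs_im_le_norm (w - ⟨x, y⟩)).trans_lt hw')
  simp only [sub_re, sub_im] at hre him
  simp only [mem_reProdIm, mem_Ioo, mem_Ioi]
  exact ⟨⟨by linarith, by linarith⟩, by linarith⟩

end Coordinates

theorem statement10_general {u : ℝ × ℝ → ℝ} {T r s : ℝ} (hT : 2 ≤ T) (hs : 0 ≤ s)
    (hper : ∀ x y : ℝ, u (x + T, y) = u (x, y))
    (hu : ContDiffOn ℝ 2 u {p : ℝ × ℝ | r - 1 < p.2})
    (hlaplace : ∀ p : ℝ × ℝ, r - 1 < p.2 → pXX u p + pYY u p = 0) (x : ℝ)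
    (hint : IntegrableOn (fun p ↦ pX u p ^ 2 + pY u p ^ 2) (Ioo 0 T ×ˢ Ioi (r - 1))) :
    (u (x, r + s) - u (x, r)) ^ 2 ≤
      2 / π * s * ∫ p in Ioo 0 T ×ˢ Ioi (r - 1), (pX u p ^ 2 + pY u p ^ 2) := by
  have harmonic : HarmonicOnNhd (onComplex u) {z : ℂ | r - 1 < z.im} :=
    harmonicOnNhd_onComplex (isOpen_lt continuous_const continuous_snd) hu hlaplace
  have energy_strip_le :
      ∫⁻ w in Ioo (x - 1) (x + 1) ×ℂ Ioi (r - 1), ‖conjGradient (onComplex u) w‖ₑ ^ 2 ≤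
        ENNReal.ofReal (∫ p in Ioo 0 T ×ˢ Ioi (r - 1), (pX u p ^ 2 + pY u p ^ 2)) := by
    rw [ofReal_integral_eq_lintegral_ofReal hint (ae_of_all _ fun p ↦ by positivity)]
    exact setLIntegral_enorm_conjGradient_reProdIm_le_of_periodic hper (by linarith)
      measurableSet_Ioi fun z hz ↦ (harmonic z hz).1.differentiableAt two_ne_zero
  have oscillation_le := sq_sub_vertical_le_of_lintegral_le (x := x)
    (isOpen_Ioo.reProdIm isOpen_Ioi).measurableSet (harmonic.mono fun z hz ↦ hz.2)
    (le_add_of_nonneg_right hs) one_pos (fun y hy ↦ ball_mk_subset_reProdIm_Ioi hy.1)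
    (integral_nonneg fun p ↦ by positivity) energy_strip_le
  rwa [mul_one, add_sub_cancel_left] at oscillation_le

/-- Oscillation of a harmonic function on the half-cylinder is controlled by its
tail energy: `|u(x, r+s) − u(x, r)|² ≤ C (s+1) ε'`. -/
theorem statement10 :
    ∃ C : ℝ, 0 < C ∧
      ∀ u : ℝ × ℝ → ℝ,
        (∀ x y : ℝ, u (x + 2 * π, y) = u (x, y)) →
        ContDiffOn ℝ 2 u {p : ℝ × ℝ | 0 < p.2} →
        (∀ p : ℝ × ℝ, 0 < p.2 → pXX u p + pYY u p = 0) →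
        ∀ x r s : ℝ, 2 ≤ r → 0 ≤ s →
          IntegrableOn (fun p => pX u p ^ 2 + pY u p ^ 2)
            (Set.Ioo (0 : ℝ) (2 * π) ×ˢ Set.Ioi (r - 1)) →
          (u (x, r + s) - u (x, r)) ^ 2
            ≤ C * (s + 1) *
              ∫ p in Set.Ioo (0 : ℝ) (2 * π) ×ˢ Set.Ioi (r - 1),
                (pX u p ^ 2 + pY u p ^ 2) := by
  refine ⟨2 / π, by positivity, fun u hper hu hlaplace x r s hr hs hint ↦ ?_⟩
  exact (statement10_general (by linarith [pi_gt_three]) hs hper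
    (hu.mono fun p (hp : r - 1 < p.2) ↦ show 0 < p.2 by linarith)
    (fun p hp ↦ hlaplace p (by linarith)) x hint).trans (by gcongr; linarith)
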